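/- Let λ_τ > 0 and λ_δ > 0 be real numbers and let l be a real number. Define f : ℝ → ℝ by f(γ) := λ_τ·e^{−(l+γ)} − λ_τ·λ_δ·e^{−2(l+γ)}, and set γ* := max(log(2·λ_δ) − l, 0). Then for every real γ ≥ 0, f(γ) ≤ f(γ*). -/

import Mathlib

/-!
With `x = exp (-(l + γ))` the objective is `lamT * (x - lamD * x ^ 2)`, a concave parabola in `x`
with vertex at `x = 1 / (2 * lamD)`, and `γ ≥ 0` means `x ≤ exp (-l)`. If the vertex lies in this
range it is the maximizer; otherwise the parabola is increasing on the range and the endpoint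
`γ = 0` is optimal.
-/

theorem best_rollout_step
    (lamT lamD l : ℝ) (hT : 0 < lamT) (hD : 0 < lamD)
    (f : ℝ → ℝ)
    (hf : ∀ γ : ℝ, f γ = lamT * Real.exp (-(l + γ)) - lamT * lamD * Real.exp (-2 * (l + γ)))
    (γstar : ℝ) (hγ : γstar = max (Real.log (2 * lamD) - l) 0) :
    ∀ γ : ℝ, 0 ≤ γ → f γ ≤ f γstar := by
  intro γ h0
  have hsq : ∀ t : ℝ, Real.exp (-2 * (l + t)) = Real.exp (-(l + t)) ^ 2 := fun t => by
    rw [sq, ← Real.exp_add]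
    ring_nf
  have h2D : 0 < 2 * lamD := by positivity
  have hvertex : Real.exp (-Real.log (2 * lamD)) * (2 * lamD) = 1 := by
    rw [Real.exp_neg, Real.exp_log h2D, inv_mul_cancel₀ h2D.ne']
  rw [hf, hf, hsq, hsq]
  suffices hmain : 0 ≤ (Real.exp (-(l + γstar)) - Real.exp (-(l + γ))) *
      (1 - lamD * (Real.exp (-(l + γstar)) + Real.exp (-(l + γ)))) by
    nlinarith [mul_nonneg hT.le hmain]
  rcases le_total (Real.log (2 * lamD) - l) 0 with h | h
  · rw [max_eq_right h] at hγ
    subst hγ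
    have h1 : Real.exp (-(l + γ)) ≤ Real.exp (-(l + 0)) := Real.exp_le_exp.2 (by linarith)
    have h2 : Real.exp (-(l + 0)) ≤ Real.exp (-Real.log (2 * lamD)) :=
      Real.exp_le_exp.2 (by linarith)
    exact mul_nonneg (by linarith) (by nlinarith)
  · rw [max_eq_left h] at hγ
    have hs : -(l + γstar) = -Real.log (2 * lamD) := by rw [hγ]; ring
    rw [hs]
    generalize Real.exp (-Real.log (2 * lamD)) = s at hvertex ⊢
    generalize Real.exp (-(l + γ)) = x
    -- At the vertex `s` the product is `lamD * (s - x) ^ 2`.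
    have : (s - x) * (1 - lamD * (s + x)) = lamD * (s - x) ^ 2 := by
      rw [← hvertex]; ring
    rw [this]
    positivity
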